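/- Let n ≥ 1 be a natural number, let a ∈ Λ_n, and let u be a nontrivial solution of the periodic problem u'' + a(x)u = 0 on (0,T), u(0) = u(T), u'(0) = u'(T), normalized so that u(0) = u(T) = 0. Then the set of zeros of u in [0,T) is finite, its cardinality m is an even number, and m ≥ 2(n+1). -/

import Mathlib

open MeasureTheory Set Real

/-- `u` is a solution of `u'' + a·u = 0` on `[c,d]`, with derivative function `v`. -/
def IsSolOn (a u v : ℝ → ℝ) (c d : ℝ) : Prop :=
  (∀ x ∈ Set.Icc c d, HasDerivWithinAt u (v x) (Set.Icc c d) x) ∧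
  (∀ x ∈ Set.Icc c d, v x = v c - ∫ t in c..x, a t * u t)

/-- Membership in `L_T`: measurable, `T`-periodic and integrable on `[0,T]`. -/
def MemLT (T : ℝ) (a : ℝ → ℝ) : Prop :=
  Measurable a ∧ (∀ x, a (x + T) = a x) ∧ IntegrableOn a (Set.Icc 0 T)

/-- `c ≺ d` : `c ≤ d` a.e. on `[0,T]` and `c < d` on a set of positive measure. -/
def Prec (T : ℝ) (c d : ℝ → ℝ) : Prop :=
  (∀ᵐ x ∂(volume.restrict (Set.Icc 0 T)), c x ≤ d x) ∧
  0 < volume {x ∈ Set.Icc 0 T | c x < d x}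

/-- `(u,v)` solves the periodic problem `u'' + a u = 0`, `u(0)=u(T)`, `u'(0)=u'(T)`. -/
def PeriodicSol (T : ℝ) (a u v : ℝ → ℝ) : Prop :=
  IsSolOn a u v 0 T ∧ u 0 = u T ∧ v 0 = v T

/-- `(u,v)` solves the antiperiodic problem `u'' + a u = 0`, `u(0)+u(T)=0`, `u'(0)+u'(T)=0`. -/
def AntiperiodicSol (T : ℝ) (a u v : ℝ → ℝ) : Prop :=
  IsSolOn a u v 0 T ∧ u 0 + u T = 0 ∧ v 0 + v T = 0

/-- The `(2n-1)`-st periodic eigenvalue `λ_{2n-1} = 4 n² π² / T²`. -/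
noncomputable def lam (T : ℝ) (n : ℕ) : ℝ := 4 * (n : ℝ) ^ 2 * Real.pi ^ 2 / T ^ 2

/-- The `(2n-1)`-st antiperiodic eigenvalue `λ̃_{2n-1} = (2n-1)² π² / T²`. -/
noncomputable def lamT (T : ℝ) (n : ℕ) : ℝ := (2 * (n : ℝ) - 1) ^ 2 * Real.pi ^ 2 / T ^ 2

/-- The set `Λ_n`. -/
def LambdaN (T : ℝ) (n : ℕ) : Set (ℝ → ℝ) :=
  {a | MemLT T a ∧ Prec T (fun _ => lam T n) a ∧
    ∃ u v : ℝ → ℝ, PeriodicSol T a u v ∧ ∃ x ∈ Set.Icc 0 T, u x ≠ 0}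

/-- The set `Λ̃_n`. -/
def LambdaTildeN (T : ℝ) (n : ℕ) : Set (ℝ → ℝ) :=
  {a | MemLT T a ∧ Prec T (fun _ => lamT T n) a ∧
    ∃ u v : ℝ → ℝ, AntiperiodicSol T a u v ∧ ∃ x ∈ Set.Icc 0 T, u x ≠ 0}

/-- The constant `β_{1,n}` of the periodic `L¹` Lyapunov inequality. -/
noncomputable def beta1 (T : ℝ) (n : ℕ) : ℝ :=
  8 * Real.pi * (n : ℝ) * ((n : ℝ) + 1) / T * Real.cot ((n : ℝ) * Real.pi / (2 * ((n : ℝ) + 1)))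

/-- The constant `β̃_{1,n}` of the antiperiodic `L¹` Lyapunov inequality. -/
noncomputable def betaT1 (T : ℝ) (n : ℕ) : ℝ :=
  2 * Real.pi * (2 * (n : ℝ) - 1) * (2 * (n : ℝ) + 1) / T *
    Real.cot ((2 * (n : ℝ) - 1) * Real.pi / (2 * (2 * (n : ℝ) + 1)))

/-!
A nontrivial solution has only simple zeros, by uniqueness for the Cauchy problem, so its zeros in
`[0, T]` are finitely many and `u'` changes sign from each zero to the next. As `u'(0) = u'(T) ≠ 0`,
the number `m` of zeros in `[0, T)` is even. Put `ω = 2nπ/T`, so that `ω² = λ_{2n-1}`. Comparison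
with `sin (ω (x - c))`, where `c` is a zero, shows that consecutive zeros are at most `π/ω` apart,
with equality only if `a = ω²` almost everywhere between them. Were all `m` gaps equal to `π/ω`,
then `a = ω²` almost everywhere on `[0, T]`, against `λ_{2n-1} ≺ a`. Hence `T < mπ/ω = mT/(2n)`,
that is, `m > 2n`, and `m ≥ 2n + 2` by parity.
-/

open Filter Topology
open scoped NNReal

lemma uIcc_subset_uIcc_of_le {α : Type*} [Lattice α] {c c' d d' : α} (hc : c ≤ c')
    (hcd : c' ≤ d') (hd : d' ≤ d) : uIcc c' d' ⊆ uIcc c d := by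
  rw [uIcc_of_le hcd, uIcc_of_le (hc.trans (hcd.trans hd))]
  exact Icc_subset_Icc hc hd

section AbsolutelyContinuous

variable {X Y : Type*} [PseudoMetricSpace X] [PseudoMetricSpace Y] {c d : ℝ}

lemma absolutelyContinuousOnInterval_congr {f g : ℝ → X}
    (hf : AbsolutelyContinuousOnInterval f c d) (hfg : EqOn f g (uIcc c d)) :
    AbsolutelyContinuousOnInterval g c d := by
  refine hf.congr' (eventually_inf_principal.2 (.of_forall fun E hE => ?_))
  refine Finset.sum_congr rfl fun i hi => ?_
  rw [hfg (hE.1 i hi).1, hfg (hE.1 i hi).2]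

lemma absolutelyContinuousOnInterval_comp {f : ℝ → X} {g : X → Y} {K : ℝ≥0}
    (hg : LipschitzOnWith K g (f '' uIcc c d)) (hf : AbsolutelyContinuousOnInterval f c d) :
    AbsolutelyContinuousOnInterval (fun x => g (f x)) c d := by
  refine squeeze_zero' (.of_forall fun E => Finset.sum_nonneg fun i _ => dist_nonneg) ?_
    (by simpa using Tendsto.const_mul (K : ℝ) hf)
  refine eventually_inf_principal.2 (.of_forall fun E hE => ?_)
  rw [Finset.mul_sum]
  exact Finset.sum_le_sum fun i hi => hg.dist_le_mul _ (mem_image_of_mem f (hE.1 i hi).1) _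
    (mem_image_of_mem f (hE.1 i hi).2)

lemma absolutelyContinuousOnInterval_exp {f : ℝ → ℝ}
    (hf : AbsolutelyContinuousOnInterval f c d) :
    AbsolutelyContinuousOnInterval (fun x => exp (f x)) c d := by
  obtain ⟨K, hK⟩ := (contDiff_exp (n := 1)).locallyLipschitz.locallyLipschitzOn
    |>.exists_lipschitzOnWith_of_compact (isCompact_uIcc.image_of_continuousOn hf.continuousOn)
  exact absolutelyContinuousOnInterval_comp hK hf

lemma le_of_ae_deriv_nonpos {f : ℝ → ℝ} (hcd : c ≤ d) (hf : AbsolutelyContinuousOnInterval f c d)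
    (hf' : ∀ᵐ x ∂volume.restrict (Icc c d), deriv f x ≤ 0) : f d ≤ f c := by
  have : ∫ x in c..d, deriv f x ≤ ∫ _ in c..d, (0 : ℝ) :=
    intervalIntegral.integral_mono_ae_restrict hcd hf.intervalIntegrable_deriv
      intervalIntegrable_const hf'
  rwa [hf.integral_deriv_eq_sub, intervalIntegral.integral_zero, sub_nonpos] at this

lemma ae_restrict_Icc_mem_Ioo (c d : ℝ) : ∀ᵐ x ∂volume.restrict (Icc c d), x ∈ Ioo c d := by
  rw [← Measure.restrict_congr_set Ioo_ae_eq_Icc]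
  exact ae_restrict_mem measurableSet_Ioo

-- Grönwall's inequality; `k` may be negative, so that it also applies with time reversed.
lemma le_mul_exp_integral_of_ae_deriv_le {f k : ℝ → ℝ} (hcd : c ≤ d)
    (hf : AbsolutelyContinuousOnInterval f c d) (hk : IntervalIntegrable k volume c d)
    (hf' : ∀ᵐ x ∂volume.restrict (Icc c d), deriv f x ≤ k x * f x) :
    f d ≤ f c * exp (∫ x in c..d, k x) := by
  let A : ℝ → ℝ := fun x => ∫ t in c..x, k t
  have hA : AbsolutelyContinuousOnInterval A c d :=
    hk.absolutelyContinuousOnInterval_intervalIntegral left_mem_uIcc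
  have hanti : f d * exp (-A d) ≤ f c * exp (-A c) := by
    refine le_of_ae_deriv_nonpos hcd
      (hf.fun_mul (absolutelyContinuousOnInterval_exp hA.fun_neg)) ?_
    filter_upwards [hf', ae_restrict_mem measurableSet_Icc,
      ae_restrict_of_ae hf.ae_differentiableAt, ae_restrict_of_ae hk.ae_hasDerivAt_integral]
      with x hle hx hfx hAx
    rw [← uIcc_of_le hcd] at hx
    rw [((hfx hx).hasDerivAt.fun_mul (hAx hx c left_mem_uIcc).fun_neg.exp).deriv]
    calc _ = exp (-A x) * (deriv f x - k x * f x) := by ring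
      _ ≤ 0 := mul_nonpos_of_nonneg_of_nonpos (exp_pos _).le (sub_nonpos.2 hle)
  have hAc : A c = 0 := intervalIntegral.integral_same
  rwa [hAc, neg_zero, exp_zero, mul_one, exp_neg, ← div_eq_mul_inv, div_le_iff₀ (exp_pos _)]
    at hanti

lemma nonpos_of_ae_abs_deriv_le {f k : ℝ → ℝ} (hf : AbsolutelyContinuousOnInterval f c d)
    (hk : IntervalIntegrable k volume c d)
    (hf' : ∀ᵐ x ∂volume.restrict (Icc c d), |deriv f x| ≤ k x * f x)
    {x₀ x : ℝ} (hx₀ : x₀ ∈ Icc c d) (hx : x ∈ Icc c d) (h₀ : f x₀ = 0) : f x ≤ 0 := by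
  rcases le_total x₀ x with h | h
  · have hsub : uIcc x₀ x ⊆ uIcc c d := uIcc_subset_uIcc_of_le hx₀.1 h hx.2
    have := le_mul_exp_integral_of_ae_deriv_le h (hf.mono hsub) (hk.mono_set hsub) <| by
        filter_upwards [ae_restrict_of_ae_restrict_of_subset (Icc_subset_Icc hx₀.1 hx.2) hf']
          with y hy using (abs_le.1 hy).2
    rwa [h₀, zero_mul] at this
  · -- Backwards in time, Grönwall's inequality applies to `-f` and `-k`.
    have hsub : uIcc x x₀ ⊆ uIcc c d := uIcc_subset_uIcc_of_le hx.1 h hx₀.2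
    have := le_mul_exp_integral_of_ae_deriv_le h (hf.mono hsub).fun_neg
      (hk.mono_set hsub).neg <| by
        filter_upwards [ae_restrict_of_ae_restrict_of_subset (Icc_subset_Icc hx.1 hx₀.2) hf']
          with y hy
        rw [deriv.fun_neg, Pi.neg_apply, neg_mul_neg]
        exact (neg_le_abs _).trans hy
    rw [h₀, neg_zero, neg_mul, neg_nonneg] at this
    exact nonpos_of_mul_nonpos_left this (exp_pos _)

end AbsolutelyContinuous

section Zeros

lemma forall_pos_or_forall_neg_of_forall_ne_zero {X : Type*} [TopologicalSpace X] {s : Set X}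
    {f : X → ℝ} (hs : IsPreconnected s) (hf : ContinuousOn f s) (hne : ∀ x ∈ s, f x ≠ 0) :
    (∀ x ∈ s, 0 < f x) ∨ ∀ x ∈ s, f x < 0 := by
  by_contra! ⟨⟨x, hx, hfx⟩, y, hy, hfy⟩
  obtain ⟨z, hz, hfz⟩ := hs.intermediate_value hx hy hf ⟨hfx, hfy⟩
  exact hne z hz hfz

lemma finite_zeros_of_hasDerivWithinAt_ne_zero {𝕜 F : Type*} [NontriviallyNormedField 𝕜]
    [NormedAddCommGroup F] [NormedSpace 𝕜 F] {f f' : 𝕜 → F} {s : Set 𝕜} (hs : IsCompact s)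
    (hf : ∀ x ∈ s, HasDerivWithinAt f (f' x) s x) (hf' : ∀ x ∈ s, f x = 0 → f' x ≠ 0) :
    (s ∩ {x | f x = 0}).Finite := by
  have hclosed : IsClosed (s ∩ {x | f x = 0}) :=
    ContinuousOn.preimage_isClosed_of_isClosed (fun x hx => (hf x hx).continuousWithinAt)
      hs.isClosed isClosed_singleton
  refine (hs.of_isClosed_subset hclosed inter_subset_left).finite
    (isDiscrete_iff_nhdsNE.2 fun x hx => ?_)
  have hne : ∀ᶠ y in 𝓝[s \ {x}] x, f y ≠ 0 := (hf x hx.1).eventually_ne (hf' x hx.1 hx.2)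
  rw [sdiff_eq, inter_comm, nhdsWithin_inter', eventually_inf_principal] at hne
  exact inf_principal_eq_bot.2 (hne.mono fun y hy hmem => hy hmem.1 hmem.2)

lemma consecutive_induction {α : Type*} [LinearOrder α] {Z : Set α} {c d : α}
    {P : ℕ → α → Prop} (hfin : (Icc c d ∩ Z).Finite) (hc : c ∈ Z) (hd : d ∈ Z) (hcd : c ≤ d)
    (zero : P 0 c)
    (succ : ∀ k, ∀ x ∈ Icc c d, ∀ y ∈ Icc c d, x ∈ Z → y ∈ Z → x < y → (∀ z ∈ Ioo x y, z ∉ Z) →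
      P k x → P (k + 1) y) :
    P (Ico c d ∩ Z).ncard d := by
  suffices ∀ y ∈ Icc c d ∩ Z, P (Ico c y ∩ Z).ncard y from this d ⟨right_mem_Icc.2 hcd, hd⟩
  intro y hy
  refine hfin.wellFoundedOn.induction (r := (· < ·))
    (P := fun y => P (Ico c y ∩ Z).ncard y) hy fun y ⟨hycd, hyZ⟩ ih => ?_
  rcases hycd.1.eq_or_lt with rfl | hcy
  · simpa using zero
  have hfinI : (Ico c y ∩ Z).Finite :=
    hfin.subset (inter_subset_inter_left Z
      (Ico_subset_Icc_self.trans (Icc_subset_Icc_right hycd.2)))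
  obtain ⟨x, ⟨⟨hcx, hxy⟩, hxZ⟩, hmax⟩ :=
    exists_max_image (Ico c y ∩ Z) id hfinI ⟨c, left_mem_Ico.2 hcy, hc⟩
  have hgap : ∀ z ∈ Ioo x y, z ∉ Z := fun z hz hzZ =>
    (hmax z ⟨⟨hcx.trans hz.1.le, hz.2⟩, hzZ⟩).not_gt hz.1
  have hinsert : Ico c y ∩ Z = insert x (Ico c x ∩ Z) := by
    ext z
    constructor
    · rintro ⟨⟨hcz, hzy⟩, hzZ⟩
      exact (hmax z ⟨⟨hcz, hzy⟩, hzZ⟩).eq_or_lt.imp_right fun hzx => ⟨⟨hcz, hzx⟩, hzZ⟩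
    · rintro (rfl | ⟨⟨hcz, hzx⟩, hzZ⟩)
      · exact ⟨⟨hcx, hxy⟩, hxZ⟩
      · exact ⟨⟨hcz, hzx.trans hxy⟩, hzZ⟩
  have hxcd : x ∈ Icc c d := ⟨hcx, hxy.le.trans hycd.2⟩
  rw [hinsert, ncard_insert_of_notMem (fun h => h.1.2.false)
    (hfinI.subset (inter_subset_inter_left Z (Ico_subset_Ico_right hxy.le)))]
  exact succ _ x hxcd y hycd hxZ hyZ hxy hgap (ih x ⟨hxcd, hxZ⟩ hxy)

end Zeros

namespace IsSolOn

variable {a b u v y z : ℝ → ℝ} {c d : ℝ}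

lemma continuousOn (h : IsSolOn a u v c d) : ContinuousOn u (Icc c d) :=
  fun x hx => (h.1 x hx).continuousWithinAt

lemma neg (h : IsSolOn a u v c d) :
    IsSolOn a (fun x => -u x) (fun x => -v x) c d := by
  refine ⟨fun x hx => (h.1 x hx).fun_neg, fun x hx => ?_⟩
  simp only [h.2 x hx, mul_neg, intervalIntegral.integral_neg]
  ring

lemma intervalIntegrable_mul (h : IsSolOn a u v c d) (ha : IntervalIntegrable a volume c d)
    (hcd : c ≤ d) : IntervalIntegrable (fun x => a x * u x) volume c d :=
  ha.mul_continuousOn (by rw [uIcc_of_le hcd]; exact h.continuousOn)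

lemma mono (h : IsSolOn a u v c d) (ha : IntervalIntegrable a volume c d) {c' d' : ℝ}
    (hc : c ≤ c') (hd : d' ≤ d) : IsSolOn a u v c' d' := by
  have hsub : Icc c' d' ⊆ Icc c d := Icc_subset_Icc hc hd
  refine ⟨fun x hx => (h.1 x (hsub hx)).mono hsub, fun x hx => ?_⟩
  have hc' : c' ∈ Icc c d := ⟨hc, hx.1.trans (hx.2.trans hd)⟩
  have hcd : c ≤ d := hc'.1.trans hc'.2
  have hint {t : ℝ} (ht : t ∈ Icc c d) : IntervalIntegrable (fun x => a x * u x) volume c t :=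
    (h.intervalIntegrable_mul ha hcd).mono_set (uIcc_subset_uIcc_of_le le_rfl ht.1 ht.2)
  rw [h.2 x (hsub hx), h.2 c' hc',
    ← intervalIntegral.integral_interval_sub_left (hint (hsub hx)) (hint hc')]
  ring

lemma absolutelyContinuous_deriv (h : IsSolOn a u v c d) (ha : IntervalIntegrable a volume c d)
    (hcd : c ≤ d) : AbsolutelyContinuousOnInterval v c d := by
  have hconst : AbsolutelyContinuousOnInterval (fun _ => v c) c d :=
    contDiffOn_const.absolutelyContinuousOnInterval
  refine absolutelyContinuousOnInterval_congr (hconst.fun_sub <|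
    (h.intervalIntegrable_mul ha hcd).absolutelyContinuousOnInterval_intervalIntegral
      left_mem_uIcc) fun x hx => ?_
  rw [uIcc_of_le hcd] at hx
  exact (h.2 x hx).symm

lemma absolutelyContinuous (h : IsSolOn a u v c d) (ha : IntervalIntegrable a volume c d)
    (hcd : c ≤ d) : AbsolutelyContinuousOnInterval u c d := by
  have hv := (h.absolutelyContinuous_deriv ha hcd).continuousOn
  obtain ⟨C, hC⟩ := isCompact_uIcc.exists_bound_of_continuousOn hv
  rw [uIcc_of_le hcd] at hC
  have hLip : LipschitzOnWith C.toNNReal u (Icc c d) :=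
    (convex_Icc c d).lipschitzOnWith_of_nnnorm_hasDerivWithin_le h.1
      fun x hx => NNReal.le_toNNReal_of_coe_le (hC x hx)
  rw [← uIcc_of_le hcd] at hLip
  exact hLip.absolutelyContinuousOnInterval

lemma ae_hasDerivAt (h : IsSolOn a u v c d) (ha : IntervalIntegrable a volume c d)
    (hcd : c ≤ d) : ∀ᵐ x ∂volume.restrict (Icc c d),
      HasDerivAt u (v x) x ∧ HasDerivAt v (-(a x * u x)) x := by
  filter_upwards [ae_restrict_Icc_mem_Ioo c d,
    ae_restrict_of_ae (h.intervalIntegrable_mul ha hcd).ae_hasDerivAt_integral] with x hx hint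
  have hnhds : Icc c d ∈ 𝓝 x := Icc_mem_nhds hx.1 hx.2
  refine ⟨(h.1 x (Ioo_subset_Icc_self hx)).hasDerivAt hnhds, ?_⟩
  have hxu : x ∈ uIcc c d := by
    rw [uIcc_of_le hcd]
    exact Ioo_subset_Icc_self hx
  exact ((hint hxu c left_mem_uIcc).const_sub (v c)).congr_of_eventuallyEq
    (eventually_of_mem hnhds h.2)

lemma eq_zero_of_apply_eq_zero_of_deriv_eq_zero (h : IsSolOn a u v c d)
    (ha : IntervalIntegrable a volume c d) {x₀ x : ℝ} (hx₀ : x₀ ∈ Icc c d) (hx : x ∈ Icc c d)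
    (hu : u x₀ = 0) (hv : v x₀ = 0) : u x = 0 := by
  have hcd : c ≤ d := hx.1.trans hx.2
  have hacu := h.absolutelyContinuous ha hcd
  have hacv := h.absolutelyContinuous_deriv ha hcd
  let E : ℝ → ℝ := fun t => u t * u t + v t * v t
  have hE' : ∀ᵐ t ∂volume.restrict (Icc c d), |deriv E t| ≤ (1 + |a t|) * E t := by
    filter_upwards [h.ae_hasDerivAt ha hcd] with t ⟨hut, hvt⟩
    have hcross : |2 * u t * v t| ≤ E t :=
      abs_le.2 ⟨by nlinarith [sq_nonneg (u t + v t)], by nlinarith [sq_nonneg (u t - v t)]⟩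
    calc |deriv E t| = |(1 - a t) * (2 * u t * v t)| := by
          rw [((hut.fun_mul hut).fun_add (hvt.fun_mul hvt)).deriv]
          congr 1
          ring
      _ = |1 - a t| * |2 * u t * v t| := abs_mul _ _
      _ ≤ (1 + |a t|) * E t := by
          gcongr
          simpa using abs_sub 1 (a t)
  have hEx : E x ≤ 0 := nonpos_of_ae_abs_deriv_le
    ((hacu.fun_mul hacu).fun_add (hacv.fun_mul hacv)) (intervalIntegrable_const.add ha.abs) hE'
    hx₀ hx (by simp only [hu, hv, mul_zero, add_zero])
  exact mul_self_eq_zero.1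
    (((le_add_of_nonneg_right (mul_self_nonneg (v x))).trans hEx).antisymm (mul_self_nonneg _))

lemma deriv_ne_zero (h : IsSolOn a u v c d) (ha : IntervalIntegrable a volume c d)
    (hnt : ∃ x ∈ Icc c d, u x ≠ 0) {x : ℝ} (hx : x ∈ Icc c d) (hu : u x = 0) : v x ≠ 0 :=
  fun hv =>
    let ⟨_, ht, hne⟩ := hnt
    hne (h.eq_zero_of_apply_eq_zero_of_deriv_eq_zero ha hx ht hu hv)

lemma finite_zeros (h : IsSolOn a u v c d) (ha : IntervalIntegrable a volume c d)
    (hnt : ∃ x ∈ Icc c d, u x ≠ 0) : (Icc c d ∩ {x | u x = 0}).Finite :=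
  finite_zeros_of_hasDerivWithinAt_ne_zero isCompact_Icc h.1 fun _ => h.deriv_ne_zero ha hnt

lemma deriv_mul_deriv_neg (h : IsSolOn a u v c d) (ha : IntervalIntegrable a volume c d)
    (hcd : c < d) (hc : u c = 0) (hd : u d = 0) (hne : ∀ x ∈ Ioo c d, u x ≠ 0) :
    v c * v d < 0 := by
  wlog hpos : ∀ x ∈ Ioo c d, 0 < u x generalizing u v
  · have hneg := (forall_pos_or_forall_neg_of_forall_ne_zero isPreconnected_Ioo
      (h.continuousOn.mono Ioo_subset_Icc_self) hne).resolve_left hpos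
    simpa only [neg_mul_neg] using this h.neg (by rw [hc, neg_zero]) (by rw [hd, neg_zero])
      (fun x hx => neg_ne_zero.2 (hne x hx)) (fun x hx => neg_pos.2 (hneg x hx))
  have hnt : ∃ x ∈ Icc c d, u x ≠ 0 :=
    let ⟨x, hx⟩ := nonempty_Ioo.2 hcd
    ⟨x, Ioo_subset_Icc_self hx, hne x hx⟩
  have hcI := left_mem_Icc.2 hcd.le
  have hdI := right_mem_Icc.2 hcd.le
  have hnonneg : ∀ x ∈ Icc c d, 0 ≤ u x := by
    intro x hx
    rcases eq_endpoints_or_mem_Ioo_of_mem_Icc hx with rfl | rfl | hx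
    exacts [hc.ge, hd.ge, (hpos x hx).le]
  have hvc : 0 ≤ (d - c) * v c := by
    simpa using IsLocalMinOn.hasFDerivWithinAt_nonneg
      (IsMinOn.localize fun x hx => hc.trans_le (hnonneg x hx)) (h.1 c hcI).hasFDerivWithinAt
      (sub_mem_posTangentConeAt_of_segment_subset (segment_eq_Icc hcd.le).subset)
  have hvd : 0 ≤ (c - d) * v d := by
    simpa using IsLocalMinOn.hasFDerivWithinAt_nonneg
      (IsMinOn.localize fun x hx => hd.trans_le (hnonneg x hx)) (h.1 d hdI).hasFDerivWithinAt
      (sub_mem_posTangentConeAt_of_segment_subset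
        (by rw [segment_symm, segment_eq_Icc hcd.le]))
  exact mul_neg_of_pos_of_neg
    ((nonneg_of_mul_nonneg_right hvc (sub_pos.2 hcd)).lt_of_ne' (h.deriv_ne_zero ha hnt hcI hc))
    ((nonpos_of_mul_nonneg_right hvd (sub_neg.2 hcd)).lt_of_ne (h.deriv_ne_zero ha hnt hdI hd))

-- The sign of `u'` alternates along the zeros of `u`.
lemma even_ncard_zeros_iff (h : IsSolOn a u v c d) (ha : IntervalIntegrable a volume c d)
    (hnt : ∃ x ∈ Icc c d, u x ≠ 0) (hc : u c = 0) (hd : u d = 0) :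
    Even (Ico c d ∩ {x | u x = 0}).ncard ↔ 0 < v c * v d := by
  have hcd : c ≤ d := let ⟨_, hx, _⟩ := hnt; hx.1.trans hx.2
  set m := (Ico c d ∩ {x | u x = 0}).ncard
  have hsign : 0 < v c * v d * (-1) ^ m := by
    refine consecutive_induction (P := fun k x => 0 < v c * v x * (-1) ^ k)
      (h.finite_zeros ha hnt) hc hd hcd ?_ ?_
    · simpa using h.deriv_ne_zero ha hnt (left_mem_Icc.2 hcd) hc
    · intro k x hx y hy hux huy hxy hgap ih
      have hneg : v x * v y < 0 :=
        (h.mono ha hx.1 hy.2).deriv_mul_deriv_neg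
          (ha.mono_set (uIcc_subset_uIcc_of_le hx.1 hxy.le hy.2))
          hxy hux huy hgap
      have hprod : 0 < (v x * v x) * (v c * v y * (-1) ^ (k + 1)) :=
        calc 0 < v c * v x * (-1) ^ k * -(v x * v y) := mul_pos ih (neg_pos.2 hneg)
          _ = (v x * v x) * (v c * v y * (-1) ^ (k + 1)) := by ring
      exact pos_of_mul_pos_right hprod (mul_self_nonneg _)
  rcases m.even_or_odd with hm | hm
  · simpa [hm, hm.neg_one_pow] using hsign
  · simp only [hm.neg_one_pow, mul_neg_one, neg_pos] at hsign
    exact iff_of_false (Nat.not_even_iff_odd.2 hm) hsign.not_gt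

-- Lagrange's identity: `u * z - v * y` is the Wronskian of the two solutions.
lemma integral_sub_mul_mul (h : IsSolOn a u v c d) (h' : IsSolOn b y z c d)
    (ha : IntervalIntegrable a volume c d) (hb : IntervalIntegrable b volume c d) (hcd : c ≤ d) :
    ∫ x in c..d, (a x - b x) * (u x * y x) = (u d * z d - v d * y d) - (u c * z c - v c * y c) := by
  have hW : AbsolutelyContinuousOnInterval (fun x => u x * z x - v x * y x) c d :=
    ((h.absolutelyContinuous ha hcd).fun_mul (h'.absolutelyContinuous_deriv hb hcd)).fun_sub
      ((h.absolutelyContinuous_deriv ha hcd).fun_mul (h'.absolutelyContinuous hb hcd))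
  rw [← hW.integral_deriv_eq_sub]
  refine intervalIntegral.integral_congr_ae_restrict
    (ae_restrict_of_ae_restrict_of_subset (uIoc_of_le hcd ▸ Ioc_subset_Icc_self) ?_)
  filter_upwards [h.ae_hasDerivAt ha hcd, h'.ae_hasDerivAt hb hcd] with x ⟨hu, hv⟩ ⟨hy, hz⟩
  rw [((hu.fun_mul hz).fun_sub (hv.fun_mul hy)).deriv]
  ring

lemma ae_nonneg_sub_mul_mul (hab : ∀ᵐ x ∂volume.restrict (Icc c d), b x ≤ a x)
    (hu : ∀ x ∈ Ioo c d, 0 < u x) (hy : ∀ x ∈ Ioo c d, 0 < y x) :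
    0 ≤ᵐ[volume.restrict (Icc c d)] fun x => (a x - b x) * (u x * y x) := by
  filter_upwards [hab, ae_restrict_Icc_mem_Ioo c d] with x hx hxI
  exact mul_nonneg (sub_nonneg.2 hx) (mul_pos (hu x hxI) (hy x hxI)).le

-- This is Sturm's comparison theorem: if `z d < 0`, then `u` is no longer positive at the zero `d`
-- of `y`.
lemma apply_mul_deriv_nonneg_of_ae_le (h : IsSolOn a u v c d) (h' : IsSolOn b y z c d)
    (ha : IntervalIntegrable a volume c d) (hb : IntervalIntegrable b volume c d) (hcd : c ≤ d)
    (hab : ∀ᵐ x ∂volume.restrict (Icc c d), b x ≤ a x)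
    (hu : ∀ x ∈ Ioo c d, 0 < u x) (hy : ∀ x ∈ Ioo c d, 0 < y x)
    (huc : u c = 0) (hyc : y c = 0) (hyd : y d = 0) : 0 ≤ u d * z d :=
  calc 0 ≤ ∫ x in c..d, (a x - b x) * (u x * y x) :=
        intervalIntegral.integral_nonneg_of_ae_restrict hcd (ae_nonneg_sub_mul_mul hab hu hy)
    _ = u d * z d := by
        rw [h.integral_sub_mul_mul h' ha hb hcd, huc, hyc, hyd]
        ring

lemma ae_eq_of_ae_le (h : IsSolOn a u v c d) (h' : IsSolOn b y z c d)
    (ha : IntervalIntegrable a volume c d) (hb : IntervalIntegrable b volume c d) (hcd : c ≤ d)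
    (hab : ∀ᵐ x ∂volume.restrict (Icc c d), b x ≤ a x)
    (hu : ∀ x ∈ Ioo c d, 0 < u x) (hy : ∀ x ∈ Ioo c d, 0 < y x)
    (huc : u c = 0) (hud : u d = 0) (hyc : y c = 0) (hyd : y d = 0) :
    ∀ᵐ x ∂volume.restrict (Icc c d), a x = b x := by
  have hnonneg := ae_nonneg_sub_mul_mul hab hu hy
  have hcont : ContinuousOn (fun x => u x * y x) (uIcc c d) := by
    rw [uIcc_of_le hcd]
    exact h.continuousOn.mul h'.continuousOn
  have hzero : ∫ x in c..d, (a x - b x) * (u x * y x) = 0 := by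
    rw [h.integral_sub_mul_mul h' ha hb hcd, huc, hud, hyc, hyd]
    ring
  rw [intervalIntegral.integral_eq_zero_iff_of_le_of_nonneg_ae hcd
    (ae_restrict_of_ae_restrict_of_subset Ioc_subset_Icc_self hnonneg)
    ((ha.sub hb).mul_continuousOn hcont), Measure.restrict_congr_set Ioc_ae_eq_Icc] at hzero
  filter_upwards [hzero, ae_restrict_Icc_mem_Ioo c d] with x hx hxI
  exact sub_eq_zero.1
    ((mul_eq_zero.1 hx).resolve_right (mul_pos (hu x hxI) (hy x hxI)).ne')

end IsSolOn

lemma isSolOn_sin (ω x₀ c d : ℝ) :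
    IsSolOn (fun _ => ω ^ 2) (fun x => sin (ω * (x - x₀)))
      (fun x => ω * cos (ω * (x - x₀))) c d := by
  have harg (x : ℝ) : HasDerivAt (fun x => ω * (x - x₀)) ω x := by
    simpa using ((hasDerivAt_id x).sub_const x₀).const_mul ω
  refine ⟨fun x _ => ?_, fun x _ => ?_⟩
  · simpa only [mul_comm ω (cos _)] using (harg x).sin.hasDerivWithinAt
  · have hderiv : ∀ t ∈ uIcc c x, HasDerivAt (fun x => ω * cos (ω * (x - x₀)))
        (-(ω ^ 2 * sin (ω * (t - x₀)))) t := fun t _ =>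
      ((harg t).cos.const_mul ω).congr_deriv (by ring)
    have hint := intervalIntegral.integral_eq_sub_of_hasDerivAt hderiv
      (Continuous.intervalIntegrable (by fun_prop) _ _)
    rw [intervalIntegral.integral_neg] at hint
    linarith

lemma sin_mul_sub_pos {ω c d x : ℝ} (hω : 0 < ω) (hωd : ω * (d - c) ≤ π) (hx : x ∈ Ioo c d) :
    0 < sin (ω * (x - c)) :=
  sin_pos_of_pos_of_lt_pi (mul_pos hω (sub_pos.2 hx.1))
    ((mul_lt_mul_of_pos_left (sub_lt_sub_right hx.2 c) hω).trans_le hωd)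

namespace IsSolOn

variable {a u v : ℝ → ℝ} {c d ω : ℝ}

lemma mul_sub_le_pi (h : IsSolOn a u v c d) (ha : IntervalIntegrable a volume c d) (hcd : c ≤ d)
    (hle : ∀ᵐ x ∂volume.restrict (Icc c d), ω ^ 2 ≤ a x) (hc : u c = 0)
    (hpos : ∀ x ∈ Ioo c d, 0 < u x) : ω * (d - c) ≤ π := by
  by_contra! hlt
  have hω : 0 < ω := pos_of_mul_pos_left (pi_pos.trans hlt) (sub_nonneg.2 hcd)
  obtain ⟨e, he⟩ : ∃ e, ω * (e - c) = π := ⟨c + π / ω, by field_simp; ring⟩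
  have hce : c < e := sub_pos.1 (pos_of_mul_pos_right (pi_pos.trans_eq he.symm) hω.le)
  have hed : e < d := (sub_lt_sub_iff_right c).1 (lt_of_mul_lt_mul_left (he.trans_lt hlt) hω.le)
  have hnonneg : 0 ≤ u e * (ω * cos (ω * (e - c))) :=
    (h.mono ha le_rfl hed.le).apply_mul_deriv_nonneg_of_ae_le (isSolOn_sin ω c c e)
      (ha.mono_set (uIcc_subset_uIcc_of_le le_rfl hce.le hed.le)) intervalIntegrable_const hce.le
      (ae_restrict_of_ae_restrict_of_subset (Icc_subset_Icc_right hed.le) hle)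
      (fun x hx => hpos x ⟨hx.1, hx.2.trans hed⟩) (fun x hx => sin_mul_sub_pos hω he.le hx)
      hc (by simp) (by rw [he, sin_pi])
  rw [he, cos_pi, mul_neg_one, mul_neg, neg_nonneg] at hnonneg
  exact hnonneg.not_gt (mul_pos (hpos e ⟨hce, hed⟩) hω)

lemma ae_eq_sq_of_mul_sub_eq_pi (h : IsSolOn a u v c d) (ha : IntervalIntegrable a volume c d)
    (hcd : c ≤ d) (hle : ∀ᵐ x ∂volume.restrict (Icc c d), ω ^ 2 ≤ a x)
    (hc : u c = 0) (hd : u d = 0) (hpos : ∀ x ∈ Ioo c d, 0 < u x) (heq : ω * (d - c) = π) :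
    ∀ᵐ x ∂volume.restrict (Icc c d), a x = ω ^ 2 := by
  have hω : 0 < ω := pos_of_mul_pos_left (pi_pos.trans_eq heq.symm) (sub_nonneg.2 hcd)
  exact h.ae_eq_of_ae_le (isSolOn_sin ω c c d) ha intervalIntegrable_const hcd hle hpos
    (fun x hx => sin_mul_sub_pos hω heq.le hx) hc hd (by simp) (by rw [heq, sin_pi])

lemma mul_sub_le_pi_and_ae_eq_sq (h : IsSolOn a u v c d) (ha : IntervalIntegrable a volume c d)
    (hcd : c ≤ d) (hle : ∀ᵐ x ∂volume.restrict (Icc c d), ω ^ 2 ≤ a x)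
    (hc : u c = 0) (hd : u d = 0) (hne : ∀ x ∈ Ioo c d, u x ≠ 0) :
    ω * (d - c) ≤ π ∧
      (ω * (d - c) = π → ∀ᵐ x ∂volume.restrict (Icc c d), a x = ω ^ 2) := by
  rcases forall_pos_or_forall_neg_of_forall_ne_zero isPreconnected_Ioo
    (h.continuousOn.mono Ioo_subset_Icc_self) hne with hpos | hneg
  · exact ⟨h.mul_sub_le_pi ha hcd hle hc hpos, h.ae_eq_sq_of_mul_sub_eq_pi ha hcd hle hc hd hpos⟩
  · have hc' : -u c = 0 := neg_eq_zero.2 hc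
    have hd' : -u d = 0 := neg_eq_zero.2 hd
    have hpos : ∀ x ∈ Ioo c d, 0 < -u x := fun x hx => neg_pos.2 (hneg x hx)
    exact ⟨h.neg.mul_sub_le_pi ha hcd hle hc' hpos,
      h.neg.ae_eq_sq_of_mul_sub_eq_pi ha hcd hle hc' hd' hpos⟩

lemma mul_sub_le_pi_mul_ncard_and_ae_eq_sq (h : IsSolOn a u v c d)
    (ha : IntervalIntegrable a volume c d) (hle : ∀ᵐ x ∂volume.restrict (Icc c d), ω ^ 2 ≤ a x)
    (hnt : ∃ x ∈ Icc c d, u x ≠ 0) (hc : u c = 0) (hd : u d = 0) :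
    ω * (d - c) ≤ π * (Ico c d ∩ {x | u x = 0}).ncard ∧
      (ω * (d - c) = π * (Ico c d ∩ {x | u x = 0}).ncard →
        ∀ᵐ x ∂volume.restrict (Icc c d), a x = ω ^ 2) := by
  have hcd : c ≤ d := let ⟨_, hx, _⟩ := hnt; hx.1.trans hx.2
  refine consecutive_induction (P := fun k x => ω * (x - c) ≤ π * k ∧
    (ω * (x - c) = π * k → ∀ᵐ t ∂volume.restrict (Icc c x), a t = ω ^ 2))
    (h.finite_zeros ha hnt) hc hd hcd (by simp) ?_
  intro k x hx y hy hux huy hxy hgap ⟨hle_k, heq_k⟩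
  obtain ⟨hle_gap, heq_gap⟩ := (h.mono ha hx.1 hy.2).mul_sub_le_pi_and_ae_eq_sq
    (ha.mono_set (uIcc_subset_uIcc_of_le hx.1 hxy.le hy.2)) hxy.le
    (ae_restrict_of_ae_restrict_of_subset (Icc_subset_Icc hx.1 hy.2) hle) hux huy hgap
  push_cast
  refine ⟨by linarith, fun heq => ?_⟩
  rw [← Icc_union_Icc_eq_Icc hx.1 hxy.le, ae_restrict_union_iff]
  exact ⟨heq_k (by linarith), heq_gap (by linarith)⟩

lemma mul_sub_lt_pi_mul_ncard (h : IsSolOn a u v c d) (ha : IntervalIntegrable a volume c d)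
    (hle : ∀ᵐ x ∂volume.restrict (Icc c d), ω ^ 2 ≤ a x)
    (hlt : 0 < volume {x ∈ Icc c d | ω ^ 2 < a x})
    (hnt : ∃ x ∈ Icc c d, u x ≠ 0) (hc : u c = 0) (hd : u d = 0) :
    ω * (d - c) < π * (Ico c d ∩ {x | u x = 0}).ncard := by
  obtain ⟨hbound, heq⟩ := h.mul_sub_le_pi_mul_ncard_and_ae_eq_sq ha hle hnt hc hd
  refine hbound.lt_of_ne fun hmul => hlt.ne' (measure_eq_zero_iff_ae_notMem.2 ?_)
  filter_upwards [(ae_restrict_iff' measurableSet_Icc).1 (heq hmul)] with x hx ⟨hxI, hax⟩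
  exact hax.ne' (hx hxI)

end IsSolOn

-- For `T`-periodic `a`, `0 ≤ v 0 * v T` says that the Floquet multiplier of `u` is positive.
theorem stmt1_general {T : ℝ} (hT : 0 < T) (n : ℕ) {a u v : ℝ → ℝ}
    (ha : IntervalIntegrable a volume 0 T) (hprec : Prec T (fun _ => lam T n) a)
    (hsol : IsSolOn a u v 0 T) (hnt : ∃ x ∈ Icc 0 T, u x ≠ 0)
    (h0 : u 0 = 0) (hTz : u T = 0) (hv : 0 ≤ v 0 * v T) :
    (Ico 0 T ∩ {x | u x = 0}).Finite ∧
    Even (Ico 0 T ∩ {x | u x = 0}).ncard ∧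
    2 * (n + 1) ≤ (Ico 0 T ∩ {x | u x = 0}).ncard := by
  have hv0 : v 0 ≠ 0 := hsol.deriv_ne_zero ha hnt (left_mem_Icc.2 hT.le) h0
  have hvT : v T ≠ 0 := hsol.deriv_ne_zero ha hnt (right_mem_Icc.2 hT.le) hTz
  have heven : Even (Ico 0 T ∩ {x | u x = 0}).ncard :=
    (hsol.even_ncard_zeros_iff ha hnt h0 hTz).2 (hv.lt_of_ne' (mul_ne_zero hv0 hvT))
  have hlam : lam T n = (2 * n * π / T) ^ 2 := by
    rw [lam]
    ring
  simp only [hlam] at hprec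
  have hlt := hsol.mul_sub_lt_pi_mul_ncard ha hprec.1 hprec.2 hnt h0 hTz
  rw [sub_zero, div_mul_cancel₀ _ hT.ne', mul_comm, mul_lt_mul_iff_right₀ pi_pos] at hlt
  have hgt : 2 * n < (Ico 0 T ∩ {x | u x = 0}).ncard := by exact_mod_cast hlt
  refine ⟨(hsol.finite_zeros ha hnt).subset (inter_subset_inter_left _ Ico_subset_Icc_self),
    heven, ?_⟩
  obtain ⟨k, hk⟩ := heven
  omega

theorem stmt1 (T : ℝ) (hT : 0 < T) (n : ℕ) (hn : 1 ≤ n)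
    (a : ℝ → ℝ) (ha : a ∈ LambdaN T n)
    (u v : ℝ → ℝ) (hsol : PeriodicSol T a u v)
    (hnt : ∃ x ∈ Set.Icc 0 T, u x ≠ 0)
    (h0 : u 0 = 0) (hTz : u T = 0) :
    (Set.Ico 0 T ∩ {x | u x = 0}).Finite ∧
    Even (Set.Ico 0 T ∩ {x | u x = 0}).ncard ∧
    2 * (n + 1) ≤ (Set.Ico 0 T ∩ {x | u x = 0}).ncard :=
  stmt1_general hT n ((intervalIntegrable_iff_integrableOn_Icc_of_le hT.le).2 ha.1.2.2)
    ha.2.1 hsol.1 hnt h0 hTz (hsol.2.2 ▸ mul_self_nonneg _)
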